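/- Let Y and Z be real-valued random variables on a probability space and suppose F_{Y|Z} is a conditional distribution function of Y given Z such that F_{Y|Z=z}(·) is continuous for every z. Then the random variable F_{Y|Z}(Y) is uniformly distributed on [0, 1] and independent of Z. -/

import Mathlib

open Set Filter MeasureTheory ProbabilityTheory

/-!
Let `κ` be a regular conditional distribution of `Y` given `Z`. Almost surely `F (Z ω)` and the
distribution function of `κ (Z ω)` agree at every rational, hence everywhere, both being
right-continuous. Thus `F (Z ω) (Y ω)` may be replaced by the jointly measurable expression
`cdf (κ (Z ω)) (Y ω)`. Conditionally on `Z` this is a random variable pushed through its own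
continuous distribution function, so its conditional law is uniform whatever the value of `Z`;
a conditional law that does not depend on `Z` is the unconditional one and means independence.
-/

section ProbabilityIntegralTransform

lemma measureReal_restrict_Icc_zero_one_Iic (x : ℝ) :
    (volume.restrict (Icc (0 : ℝ) 1)).real (Iic x) = max (min 1 x) 0 := by
  have hinter : Iic x ∩ Icc 0 1 = Icc 0 (min 1 x) := by
    ext y
    simp only [mem_inter_iff, mem_Iic, mem_Icc, le_min_iff]
    tauto
  rw [measureReal_restrict_apply measurableSet_Iic, hinter, Real.volume_real_Icc, sub_zero]

lemma measure_le_eq_ofReal_of_hasLaw_volume_restrict_Icc {Ω : Type*} [MeasurableSpace Ω]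
    {μ : Measure Ω} {U : Ω → ℝ} (hU : HasLaw U (volume.restrict (Icc 0 1)) μ) {x : ℝ}
    (hx : x ∈ Icc (0 : ℝ) 1) : μ {ω | U ω ≤ x} = ENNReal.ofReal x :=
  calc μ {ω | U ω ≤ x} = (volume.restrict (Icc (0 : ℝ) 1)) (Iic x) :=
        hU.measure_eq measurableSet_Iic
    _ = ENNReal.ofReal ((volume.restrict (Icc (0 : ℝ) 1)).real (Iic x)) := (ofReal_measureReal).symm
    _ = ENNReal.ofReal x := by
        rw [measureReal_restrict_Icc_zero_one_Iic, min_eq_right hx.2, max_eq_left hx.1]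

variable {ν : Measure ℝ}

lemma exists_cdf_eq (hcont : Continuous (cdf ν)) {c : ℝ} (hc : c ∈ Ioo (0 : ℝ) 1) :
    ∃ t, cdf ν t = c :=
  mem_range_of_exists_le_of_exists_ge hcont
    ((tendsto_cdf_atBot ν).eventually_le_const hc.1).exists
    ((tendsto_cdf_atTop ν).eventually_const_le hc.2).exists

variable [IsProbabilityMeasure ν]

lemma min_le_measureReal_cdf_le (hcont : Continuous (cdf ν)) (x : ℝ) :
    min 1 x ≤ ν.real {y | cdf ν y ≤ x} := by
  refine le_of_forall_lt_imp_le_of_dense fun c hc => ?_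
  obtain ⟨hc1, hcx⟩ := lt_min_iff.1 hc
  rcases le_or_gt c 0 with hc0 | hc0
  · exact hc0.trans measureReal_nonneg
  obtain ⟨t, rfl⟩ := exists_cdf_eq hcont ⟨hc0, hc1⟩
  calc cdf ν t = ν.real (Iic t) := cdf_eq_real ν t
    _ ≤ ν.real {y | cdf ν y ≤ x} :=
      measureReal_mono fun _ hy => (monotone_cdf ν hy).trans hcx.le

lemma measureReal_cdf_le_le_max (hcont : Continuous (cdf ν)) (x : ℝ) :
    ν.real {y | cdf ν y ≤ x} ≤ max (min 1 x) 0 := by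
  refine le_of_forall_gt_imp_ge_of_dense fun c hc => ?_
  obtain ⟨hcx, hc0⟩ := max_lt_iff.1 hc
  rcases le_or_gt 1 c with hc1 | hc1
  · exact measureReal_le_one.trans hc1
  have hxc : x < c := (min_lt_iff.1 hcx).resolve_left hc1.not_gt
  obtain ⟨t, rfl⟩ := exists_cdf_eq hcont ⟨hc0, hc1⟩
  calc ν.real {y | cdf ν y ≤ x} ≤ ν.real (Iic t) :=
      measureReal_mono fun _ hy => ((monotone_cdf ν).reflect_lt (hy.trans_lt hxc)).le
    _ = cdf ν t := (cdf_eq_real ν t).symm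

theorem map_cdf_eq_volume_restrict_Icc (hcont : Continuous (cdf ν)) :
    ν.map (cdf ν) = volume.restrict (Icc 0 1) := by
  have := Measure.isProbabilityMeasure_map (μ := ν) hcont.measurable.aemeasurable
  refine Measure.ext_of_Iic _ _ fun x => (measureReal_eq_measureReal_iff).1 ?_
  rw [map_measureReal_apply hcont.measurable measurableSet_Iic,
    measureReal_restrict_Icc_zero_one_Iic]
  exact (measureReal_cdf_le_le_max hcont x).antisymm
    (max_le (min_le_measureReal_cdf_le hcont x) measureReal_nonneg)

end ProbabilityIntegralTransform

section ConditionalDistribution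

lemma eq_of_eqOn_dense_of_rightContinuous {α β : Type*} [LinearOrder α] [TopologicalSpace α]
    [OrderTopology α] [DenselyOrdered α] [NoMaxOrder α] [TopologicalSpace β] [T2Space β]
    {f g : α → β} {D : Set α} (hD : Dense D) (hfg : EqOn f g D)
    (hf : ∀ x, ContinuousWithinAt f (Ioi x) x) (hg : ∀ x, ContinuousWithinAt g (Ioi x) x) :
    f = g := by
  ext x
  refine tendsto_nhds_unique_of_frequently_eq (hf x) (hg x) ?_
  refine (nhdsGT_basis x).frequently_iff.2 fun b hb => ?_
  obtain ⟨d, hdD, hd⟩ := hD.exists_between hb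
  exact ⟨d, hd, hfg hdD⟩

variable {Ω β : Type*} [MeasurableSpace Ω] [mβ : MeasurableSpace β]

lemma measurable_cdf_kernel (κ : Kernel β ℝ) [IsMarkovKernel κ] :
    Measurable fun p : β × ℝ => cdf (κ p.1) p.2 := by
  have hs : MeasurableSet {p : (β × ℝ) × ℝ | p.2 ≤ p.1.2} :=
    measurableSet_le measurable_snd measurable_fst.snd
  simp only [cdf_eq_real]
  exact (Kernel.measurable_kernel_prodMk_left (κ := κ.prodMkRight ℝ) hs).ennreal_toReal

variable {μ : Measure Ω} [IsFiniteMeasure μ] {Y : Ω → ℝ} {Z : Ω → β}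

theorem cdf_condDistrib_ae_eq (hY : Measurable Y) (hZ : Measurable Z) {F : β → ℝ → ℝ}
    (hcont : ∀ᵐ ω ∂μ, ∀ y, ContinuousWithinAt (F (Z ω)) (Ioi y) y)
    (hver : ∀ y, (fun ω => F (Z ω) y) =ᵐ[μ] μ⟦Y ⁻¹' Iic y | mβ.comap Z⟧) :
    ∀ᵐ ω ∂μ, cdf (condDistrib Y Z μ (Z ω)) = F (Z ω) := by
  have hrat : ∀ᵐ ω ∂μ, ∀ q : ℚ, cdf (condDistrib Y Z μ (Z ω)) q = F (Z ω) q := by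
    refine ae_all_iff.2 fun q => ?_
    simp only [cdf_eq_real]
    exact (condDistrib_ae_eq_condExp hZ hY measurableSet_Iic).trans (hver q).symm
  filter_upwards [hrat, hcont] with ω hω hFω
  exact eq_of_eqOn_dense_of_rightContinuous Rat.denseRange_cast (forall_mem_range.2 hω)
    (fun y => ((cdf _).right_continuous y).mono Ioi_subset_Ici_self) hFω

theorem condExp_cdf_condDistrib_preimage (hY : Measurable Y) (hZ : Measurable Z)
    (hcont : ∀ᵐ ω ∂μ, Continuous (cdf (condDistrib Y Z μ (Z ω)))) {s : Set ℝ}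
    (hs : MeasurableSet s) :
    μ⟦(fun ω => cdf (condDistrib Y Z μ (Z ω)) (Y ω)) ⁻¹' s | mβ.comap Z⟧ =ᵐ[μ]
      fun _ => (volume.restrict (Icc 0 1)).real s := by
  set G : β × ℝ → ℝ := fun p => cdf (condDistrib Y Z μ p.1) p.2
  have hG : MeasurableSet (G ⁻¹' s) := measurable_cdf_kernel _ hs
  have hpair : Measurable fun ω => (Z ω, Y ω) := hZ.prodMk hY
  have hcond := condExp_prod_ae_eq_integral_condDistrib (μ := μ) hZ hY.aemeasurable
    (stronglyMeasurable_one.indicator hG : StronglyMeasurable ((G ⁻¹' s).indicator (1 : β × ℝ → ℝ)))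
    ((integrable_const (1 : ℝ)).indicator (hpair hG))
  refine hcond.trans ?_
  filter_upwards [hcont] with ω hω
  calc ∫ y, (G ⁻¹' s).indicator 1 (Z ω, y) ∂condDistrib Y Z μ (Z ω)
      = (condDistrib Y Z μ (Z ω)).real (cdf (condDistrib Y Z μ (Z ω)) ⁻¹' s) :=
        integral_indicator_one (hω.measurable hs)
    _ = (volume.restrict (Icc 0 1)).real s := by
        rw [← map_measureReal_apply hω.measurable hs, map_cdf_eq_volume_restrict_Icc hω]

end ConditionalDistribution

section ConstantConditionalLaw

variable {Ω : Type*} {m mΩ : MeasurableSpace Ω} {μ : Measure Ω}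

lemma measureReal_inter_eq_mul_of_condExp_eq_const [IsFiniteMeasure μ] (hm : m ≤ mΩ) {s t : Set Ω}
    (hs : MeasurableSet s) (ht : MeasurableSet[m] t) {c : ℝ} (hc : μ⟦s | m⟧ =ᵐ[μ] fun _ => c) :
    μ.real (s ∩ t) = c * μ.real t :=
  calc μ.real (s ∩ t) = ∫ ω in t, s.indicator (fun _ => (1 : ℝ)) ω ∂μ := by
        rw [integral_indicator_const _ hs, measureReal_restrict_apply hs, smul_eq_mul, mul_one]
    _ = ∫ ω in t, (μ⟦s | m⟧) ω ∂μ :=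
        (setIntegral_condExp hm ((integrable_const _).indicator hs) ht).symm
    _ = ∫ _ in t, c ∂μ := integral_congr_ae (ae_restrict_of_ae hc)
    _ = c * μ.real t := by rw [setIntegral_const, smul_eq_mul, mul_comm]

variable [IsProbabilityMeasure μ] {α β : Type*} [MeasurableSpace α] [mβ : MeasurableSpace β]

theorem hasLaw_and_indepFun_of_condExp_preimage_eq_const {U : Ω → α} {Z : Ω → β}
    (hU : Measurable U) (hZ : Measurable Z) {ν : Measure α} [IsFiniteMeasure ν]
    (hconst : ∀ s, MeasurableSet s → μ⟦U ⁻¹' s | mβ.comap Z⟧ =ᵐ[μ] fun _ => ν.real s) :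
    HasLaw U ν μ ∧ IndepFun U Z μ := by
  have hinter {s : Set α} {t : Set β} (hs : MeasurableSet s) (ht : MeasurableSet t) :
      μ (U ⁻¹' s ∩ Z ⁻¹' t) = ν s * μ (Z ⁻¹' t) := by
    rw [← ENNReal.toReal_eq_toReal_iff' (by finiteness) (by finiteness), ENNReal.toReal_mul]
    exact measureReal_inter_eq_mul_of_condExp_eq_const hZ.comap_le (hU hs) ⟨t, ht, rfl⟩
      (hconst s hs)
  have hlaw {s : Set α} (hs : MeasurableSet s) : μ (U ⁻¹' s) = ν s := by
    simpa using hinter hs MeasurableSet.univ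
  refine ⟨⟨hU.aemeasurable, Measure.ext fun s hs => ?_⟩,
    indepFun_iff_measure_inter_preimage_eq_mul.2 fun s t hs ht => ?_⟩
  · rw [Measure.map_apply hU hs, hlaw hs]
  · rw [hinter hs ht, hlaw hs]

end ConstantConditionalLaw

theorem stmt_10_general {Ω β : Type*} [MeasurableSpace Ω] [mβ : MeasurableSpace β]
    {μ : Measure Ω} [IsProbabilityMeasure μ] {Y : Ω → ℝ} {Z : Ω → β}
    (hY : Measurable Y) (hZ : Measurable Z) {F : β → ℝ → ℝ}
    (hcont : ∀ᵐ ω ∂μ, Continuous (F (Z ω)))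
    (hver : ∀ y, (fun ω => F (Z ω) y) =ᵐ[μ] μ⟦Y ⁻¹' Iic y | mβ.comap Z⟧) :
    HasLaw (fun ω => F (Z ω) (Y ω)) (volume.restrict (Icc 0 1)) μ ∧
      IndepFun (fun ω => F (Z ω) (Y ω)) Z μ := by
  have hcdf : ∀ᵐ ω ∂μ, cdf (condDistrib Y Z μ (Z ω)) = F (Z ω) :=
    cdf_condDistrib_ae_eq hY hZ (hcont.mono fun _ h _ => h.continuousWithinAt) hver
  have hcdf_cont : ∀ᵐ ω ∂μ, Continuous (cdf (condDistrib Y Z μ (Z ω))) := by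
    filter_upwards [hcdf, hcont] with ω hω hFω using hω ▸ hFω
  have hU_eq : (fun ω => cdf (condDistrib Y Z μ (Z ω)) (Y ω)) =ᵐ[μ] fun ω => F (Z ω) (Y ω) :=
    hcdf.mono fun ω hω => congrFun hω (Y ω)
  obtain ⟨hlaw, hindep⟩ := hasLaw_and_indepFun_of_condExp_preimage_eq_const
    ((measurable_cdf_kernel (condDistrib Y Z μ)).comp (hZ.prodMk hY)) hZ
    fun s hs => condExp_cdf_condDistrib_preimage hY hZ hcdf_cont hs
  exact ⟨hlaw.congr hU_eq.symm, hindep.congr hU_eq .rfl⟩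

/-- Conditional probability integral transform: if `F (Z ω) ·` is a continuous
conditional distribution function of `Y` given `Z`, then `F (Z ω) (Y ω)` is
uniformly distributed on `[0,1]` and independent of `Z`. -/
theorem stmt_10 {Ω : Type*} [MeasurableSpace Ω] (μ : Measure Ω) [IsProbabilityMeasure μ]
    (Y Z : Ω → ℝ) (hY : Measurable Y) (hZ : Measurable Z)
    (F : ℝ → ℝ → ℝ)
    (hmono : ∀ z, Monotone (F z)) (hcont : ∀ z, Continuous (F z))
    (h0 : ∀ z, Tendsto (F z) atBot (nhds 0)) (h1 : ∀ z, Tendsto (F z) atTop (nhds 1))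
    (hver : ∀ y : ℝ, (fun ω => F (Z ω) y) =ᵐ[μ]
      μ[Set.indicator {ω | Y ω ≤ y} (fun _ => (1 : ℝ)) |
        MeasurableSpace.comap Z Real.measurableSpace]) :
    (∀ x ∈ Icc (0:ℝ) 1, μ {ω | F (Z ω) (Y ω) ≤ x} = ENNReal.ofReal x) ∧
      IndepFun (fun ω => F (Z ω) (Y ω)) Z μ := by
  exact (stmt_10_general hY hZ (.of_forall fun ω => hcont (Z ω)) hver).imp_left
    fun hlaw _ hx => measure_le_eq_ofReal_of_hasLaw_volume_restrict_Icc hlaw hx
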